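/- Fix μ ∈ ℝ^n. Suppose T is a symmetric k-tensor on ℝ^n (invariant under permuting its k arguments) such that T^{i₁…i_k} = 0 for every multi-index (i₁,…,i_k) with pairwise distinct entries. Then Σ_{σ ∈ P^k} Σ_{l=1}^{k} sign(σ_{(l)}) · Diag^{σ_{(l)}} T^{(l)}_out = 0, where the outer sum is over all permutations σ on {1,…,k}. -/

import Mathlib

open scoped BigOperators
open Filter Asymptotics Matrix

attribute [local instance] Matrix.normedAddCommGroup

noncomputable section

/-- A `k`-tensor on `ℝ^n`, identified with its array of entries. -/
abbrev Tensor (k n : ℕ) : Type := (Fin k → Fin n) → ℝ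

/-- A `2k`-tensor on `ℝ^n`, with its indices grouped into two groups of `k`. -/
abbrev Tensor2 (k n : ℕ) : Type := (Fin k → Fin n) → (Fin k → Fin n) → ℝ

/-- The `σ`-Hadamard product of `k` matrices:
`(H₁ ∘_σ ⋯ ∘_σ H_k)^{i₁…i_k} = ∏ s, H_s^{i_s i_{σ⁻¹(s)}}`. -/
def hadamardProd {k n : ℕ} (σ : Equiv.Perm (Fin k))
    (H : Fin k → Matrix (Fin n) (Fin n) ℝ) : Tensor k n :=
  fun i => ∏ s, H s (i s) (i (σ⁻¹ s))

/-- The dot product of two `k`-tensors. -/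
def tdot {k n : ℕ} (T₁ T₂ : Tensor k n) : ℝ :=
  ∑ p : Fin k → Fin n, T₁ p * T₂ p

/-- `Diag^σ T`, the `2k`-tensor equal to `T^{i₁…i_k}` when `i_s = j_{σ(s)}` for all `s`,
and `0` otherwise. -/
def diagPerm {k n : ℕ} (σ : Equiv.Perm (Fin k)) (T : Tensor k n) : Tensor2 k n :=
  fun i j => if ∀ s, i s = j (σ s) then T i else 0

/-- A `2k`-tensor viewed as a `k`-tensor on matrix arguments:
`S[H₁,…,H_k] = ∑_{p,q} S^{p₁…p_k}_{q₁…q_k} ∏ s, H_s^{p_s q_s}`. -/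
def apply2 {k n : ℕ} (S : Tensor2 k n)
    (H : Fin k → Matrix (Fin n) (Fin n) ℝ) : ℝ :=
  ∑ p : Fin k → Fin n, ∑ q : Fin k → Fin n, S p q * ∏ s, H s (p s) (q s)

/-- Conjugation `U S Uᵀ` of a `2k`-tensor `S` by a matrix `U`. -/
def conj2 {k n : ℕ} (U : Matrix (Fin n) (Fin n) ℝ) (S : Tensor2 k n) : Tensor2 k n :=
  fun i j => ∑ p : Fin k → Fin n, ∑ q : Fin k → Fin n,
    S p q * ((∏ s, U (i s) (p s)) * ∏ s, U (j s) (q s))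

/-- For a `2(k+1)`-tensor `S` viewed as a `(k+1)`-tensor on matrices, `S[H]` fixes the last
matrix argument to `H`, producing a `2k`-tensor. -/
def lastApply {k n : ℕ} (S : Tensor2 (k+1) n)
    (H : Matrix (Fin n) (Fin n) ℝ) : Tensor2 k n :=
  fun i j => ∑ a : Fin n, ∑ b : Fin n, S (Fin.snoc i a) (Fin.snoc j b) * H a b

/-- `T[x]`: contraction of the last index of a `(k+1)`-tensor against a vector. -/
def contract {k n : ℕ} (T : Tensor (k+1) n) (x : Fin n → ℝ) : Tensor k n :=
  fun i => ∑ a : Fin n, T (Fin.snoc i a) * x a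

/-- A permutation `σ` of `{1,…,k}` viewed as a permutation of `{1,…,k+1}` fixing `k+1`. -/
def extPerm {k : ℕ} (σ : Equiv.Perm (Fin k)) : Equiv.Perm (Fin (k+1)) :=
  (Equiv.permCongr finSuccEquivLast).symm σ.optionCongr

/-- `σ_{(l)} := σ ∘ τ_l`, where `τ_l` is the transposition `(l, k+1)` (and `σ` fixes `k+1`).
Here `l : Fin (k+1)`; taking `l = Fin.last k` gives `σ_{(k+1)} = σ`. -/
def permIns {k : ℕ} (σ : Equiv.Perm (Fin k)) (l : Fin (k+1)) : Equiv.Perm (Fin (k+1)) :=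
  extPerm σ * Equiv.swap l (Fin.last k)

/-- A tensor is `μ`-block-constant if its entries agree on componentwise `μ`-equivalent
multi-indices (`i ∼ j` iff `μ i = μ j`). -/
def BlockConstant {k n : ℕ} (μ : Fin n → ℝ) (T : Tensor k n) : Prop :=
  ∀ i j : Fin k → Fin n, (∀ s, μ (i s) = μ (j s)) → T i = T j

/-- `H_in`: the diagonal-block part of `H` (w.r.t. the blocks of `μ`). -/
def matIn {n : ℕ} (μ : Fin n → ℝ) (H : Matrix (Fin n) (Fin n) ℝ) :
    Matrix (Fin n) (Fin n) ℝ :=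
  Matrix.of fun i j => if μ i = μ j then H i j else 0

/-- `H_out = H - H_in`: the off-diagonal-block part of `H`. -/
def matOut {n : ℕ} (μ : Fin n → ℝ) (H : Matrix (Fin n) (Fin n) ℝ) :
    Matrix (Fin n) (Fin n) ℝ :=
  H - matIn μ H

/-- The divided-difference tensor `T^{(l)}_out` of a `k`-tensor `T`, a `(k+1)`-tensor. -/
def outDD {k n : ℕ} (μ : Fin n → ℝ) (T : Tensor k n) (l : Fin k) : Tensor (k+1) n :=
  fun i => if μ (i l.castSucc) = μ (i (Fin.last k)) then 0
    else (T (Function.update (fun s => i s.castSucc) l (i (Fin.last k)))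
          - T (fun s => i s.castSucc)) / (μ (i (Fin.last k)) - μ (i l.castSucc))

/-- `T^{τ_l}`: the `(k+1)`-tensor equal to `T^{i₁…i_k}` on the hyperplane `i_l = i_{k+1}`
and `0` elsewhere. -/
def liftTau {k n : ℕ} (T : Tensor k n) (l : Fin k) : Tensor (k+1) n :=
  fun i => if i l.castSucc = i (Fin.last k) then T (fun s => i s.castSucc) else 0

/-- `T^{τ_l}_in`: the "inflated" `(k+1)`-tensor, equal to
`T^{i₁…i_{l-1} i_{k+1} i_{l+1}…i_k}` when `μ_{i_l} = μ_{i_{k+1}}` and `0` otherwise. -/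
def liftTauIn {k n : ℕ} (μ : Fin n → ℝ) (T : Tensor k n) (l : Fin k) : Tensor (k+1) n :=
  fun i => if μ (i l.castSucc) = μ (i (Fin.last k))
    then T (Function.update (fun s => i s.castSucc) l (i (Fin.last k))) else 0

/-- `lam` is the map sending each symmetric matrix to the vector of its eigenvalues
ordered nonincreasingly: it is nonincreasing and realized by an orthogonal
diagonalization. -/
def IsEigCF {n : ℕ} (lam : Matrix (Fin n) (Fin n) ℝ → Fin n → ℝ) : Prop :=
  ∀ A : Matrix (Fin n) (Fin n) ℝ, A.IsSymm →
    Antitone (lam A) ∧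
    ∃ U : Matrix (Fin n) (Fin n) ℝ, Uᵀ * U = 1 ∧
      A = U * Matrix.diagonal (lam A) * Uᵀ

/-- `h` is the concatenated vector `(λ(X₁ᵀ A X₁), …, λ(X_rᵀ A X_r))` of the nonincreasingly
ordered eigenvalues of the diagonal blocks of `A` (blocks determined by `μ`):
equivalently, `h` is nonincreasing within each block of `μ` and `Diag h` is obtained from
`A_in` by conjugating with a block-diagonal orthogonal matrix. -/
def IsBlockEig {n : ℕ} (μ : Fin n → ℝ) (A : Matrix (Fin n) (Fin n) ℝ)
    (h : Fin n → ℝ) : Prop :=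
  (∀ i j : Fin n, i ≤ j → μ i = μ j → h j ≤ h i) ∧
  ∃ V : Matrix (Fin n) (Fin n) ℝ, Vᵀ * V = 1 ∧
    (∀ i j, μ i ≠ μ j → V i j = 0) ∧
    Vᵀ * matIn μ A * V = Matrix.diagonal h

/-- Divided difference extended by zero to the last position. -/
def outG {k n : ℕ} (μ : Fin n → ℝ) (T : Tensor k n) (i : Fin (k+1) → Fin n)
    (l : Fin (k+1)) : ℝ :=
  Fin.lastCases (motive := fun _ => ℝ) 0 (fun l => outDD μ T l i) l

lemma extPerm_last {k : ℕ} (σ : Equiv.Perm (Fin k)) :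
    extPerm σ (Fin.last k) = Fin.last k := by
  simp [extPerm, Equiv.permCongr]

lemma permIns_self {k : ℕ} (σ : Equiv.Perm (Fin k)) (l : Fin (k+1)) :
    permIns σ l l = Fin.last k := by
  simp [permIns, extPerm_last]

lemma permIns_bij (k : ℕ) : Function.Bijective
    (fun x : Equiv.Perm (Fin k) × Fin (k+1) => permIns x.1 x.2) := by
  rw [Fintype.bijective_iff_injective_and_card]
  refine ⟨?_, ?_⟩
  · rintro ⟨σ, l⟩ ⟨σ', l'⟩ h
    simp only at h
    have hl : l = l' := by
      apply (permIns σ l).injective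
      rw [permIns_self, h, permIns_self]
    subst hl
    have h2 : extPerm σ = extPerm σ' := mul_right_cancel h
    have h3 : σ.optionCongr = σ'.optionCongr :=
      (Equiv.permCongr finSuccEquivLast).symm.injective h2
    have h4 : σ = σ' := Equiv.optionCongr_injective h3
    rw [h4]
  · simp [Fintype.card_perm, Nat.factorial_succ, mul_comm]

lemma outG_castSucc {k n : ℕ} (μ : Fin n → ℝ) (T : Tensor k n) (i : Fin (k+1) → Fin n)
    (l : Fin k) : outG μ T i l.castSucc = outDD μ T l i := by
  simp [outG]

lemma outG_last {k n : ℕ} (μ : Fin n → ℝ) (T : Tensor k n) (i : Fin (k+1) → Fin n) :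
    outG μ T i (Fin.last k) = 0 := by
  simp [outG]

lemma outG_eq {k n : ℕ} (μ : Fin n → ℝ) (T : Tensor k n)
    (hsymm : ∀ (π : Equiv.Perm (Fin k)) (p : Fin k → Fin n), T (p ∘ ⇑π) = T p)
    (i : Fin (k+1) → Fin n) (a b : Fin (k+1)) (h : i a = i b) :
    outG μ T i a = outG μ T i b := by
  induction a using Fin.lastCases with
  | last =>
    induction b using Fin.lastCases with
    | last => rfl
    | cast b => rw [outG_last, outG_castSucc, outDD, if_pos (by rw [h])]
  | cast a =>
    induction b using Fin.lastCases with
    | last => rw [outG_last, outG_castSucc, outDD, if_pos (by rw [h])]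
    | cast b =>
      rw [outG_castSucc, outG_castSucc, outDD, outDD, h]
      have : Function.update (fun s : Fin k => i s.castSucc) a (i (Fin.last k))
          = Function.update (fun s : Fin k => i s.castSucc) b (i (Fin.last k)) ∘
            Equiv.swap a b := by
        funext s
        simp only [Function.comp, Function.update_apply, Equiv.swap_apply_def]
        split_ifs <;> simp_all
      rw [this, hsymm]

lemma outG_inj {k n : ℕ} (μ : Fin n → ℝ) (T : Tensor k n)
    (hvanish : ∀ p : Fin k → Fin n, Function.Injective p → T p = 0)
    (i : Fin (k+1) → Fin n) (hi : Function.Injective i) (a : Fin (k+1)) :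
    outG μ T i a = 0 := by
  induction a using Fin.lastCases with
  | last => exact outG_last μ T i
  | cast a =>
    rw [outG_castSucc, outDD]
    have h1 : Function.Injective (fun s : Fin k => i s.castSucc) :=
      hi.comp (Fin.castSucc_injective k)
    have h2 : Function.Injective
        (Function.update (fun s : Fin k => i s.castSucc) a (i (Fin.last k))) := by
      intro s t hst
      simp only [Function.update_apply] at hst
      split_ifs at hst with hs ht ht
      · rw [hs, ht]
      · exact absurd (hi hst).symm (Fin.castSucc_ne_last t)
      · exact absurd (hi hst) (Fin.castSucc_ne_last s)
      · exact h1 hst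
    rw [hvanish _ h1, hvanish _ h2]
    simp

theorem statement18 {n k : ℕ} (μ : Fin n → ℝ) (T : Tensor k n)
    (hsymm : ∀ (π : Equiv.Perm (Fin k)) (p : Fin k → Fin n), T (p ∘ ⇑π) = T p)
    (hvanish : ∀ p : Fin k → Fin n, Function.Injective p → T p = 0) :
    ∑ σ : Equiv.Perm (Fin k), ∑ l : Fin k,
        ((Equiv.Perm.sign (permIns σ l.castSucc) : ℤ)
          • diagPerm (permIns σ l.castSucc) (outDD μ T l))
      = (0 : Tensor2 (k+1) n) := by
  funext i j
  let f : Equiv.Perm (Fin (k+1)) → ℝ := fun ν =>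
    ((Equiv.Perm.sign ν : ℤ) : ℝ) *
      (if ∀ s, i s = j (ν s) then outG μ T i (ν⁻¹ (Fin.last k)) else 0)
  have key : ∀ (σ : Equiv.Perm (Fin k)) (l : Fin (k+1)), f (permIns σ l) =
      ((Equiv.Perm.sign (permIns σ l) : ℤ) : ℝ) *
        (if ∀ s, i s = j (permIns σ l s) then outG μ T i l else 0) := by
    intro σ l
    have : (permIns σ l)⁻¹ (Fin.last k) = l := by
      rw [Equiv.Perm.inv_eq_iff_eq, permIns_self]
    simp only [f, this]
  have hS : ∑ σ : Equiv.Perm (Fin k), ∑ l : Fin (k+1), f (permIns σ l) = ∑ ν, f ν := by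
    rw [← Fintype.sum_prod_type']
    exact Fintype.sum_bijective _ (permIns_bij k) _ _ (fun _ => rfl)
  have h0 : ∑ ν, f ν = 0 := by
    by_cases hi : Function.Injective i
    · apply Finset.sum_eq_zero
      intro ν _
      simp [f, outG_inj μ T hvanish i hi]
    · simp only [Function.Injective, not_forall] at hi
      obtain ⟨a, b, hab, hne⟩ := hi
      have hsw : ∀ s, i (Equiv.swap a b s) = i s := by
        intro s
        rw [Equiv.swap_apply_def]
        split_ifs <;> simp_all
      have hneg : ∀ ν, f (ν * Equiv.swap a b) = - f ν := by
        intro ν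
        have hc : (∀ s, i s = j ((ν * Equiv.swap a b) s)) ↔ ∀ s, i s = j (ν s) := by
          constructor
          · intro h s
            have := h (Equiv.swap a b s)
            rwa [hsw, Equiv.Perm.mul_apply, Equiv.swap_apply_self] at this
          · intro h s
            rw [Equiv.Perm.mul_apply, ← h, hsw]
        have hg : outG μ T i ((ν * Equiv.swap a b)⁻¹ (Fin.last k))
            = outG μ T i (ν⁻¹ (Fin.last k)) := by
          apply outG_eq μ T hsymm
          rw [_root_.mul_inv_rev, Equiv.swap_inv, Equiv.Perm.mul_apply, hsw]
        simp only [f, hc, hg, Equiv.Perm.sign_mul, Equiv.Perm.sign_swap hne]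
        split_ifs <;> simp
      have := Fintype.sum_equiv (Equiv.mulRight (Equiv.swap a b))
        (fun ν => f (ν * Equiv.swap a b)) f (fun _ => rfl)
      simp only [hneg, Finset.sum_neg_distrib] at this
      linarith
  rw [← hS] at h0
  simp only [Fin.sum_univ_castSucc, key, outG_last, outG_castSucc, ite_self, mul_zero,
    add_zero] at h0
  simp only [Finset.sum_apply, Pi.smul_apply, diagPerm, zsmul_eq_mul, Pi.zero_apply]
  exact h0

end
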